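/- Let n ∈ ℕ, let q be a nonzero complex number with q^j ≠ 1 for all 1 ≤ j ≤ 2n, and let c : ℤ → ℂ be an arbitrary function. Using the convention that 1/(q;q)_j = 0 whenever j < 0 (so all sums below are finite), one has Σ_{k∈ℤ} c(k) / ((q;q)_{n−k}·(q;q)_{n+k}) = Σ_{j=0}^n (q^{j²}/(q;q)_{n−j}) · Σ_{k∈ℤ} c(k)·q^{−k²} / ((q;q)_{j−k}·(q;q)_{j+k}). -/

import Mathlib

/-- The finite q-Pochhammer symbol `(x;q)_n = ∏_{i=1}^n (1 - x q^{i-1})`. -/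
noncomputable def qPoch (q x : ℂ) (n : ℕ) : ℂ := ∏ i ∈ Finset.range n, (1 - x * q ^ i)

/-- `1/(q;q)_j` for `j : ℤ`, with the convention that it is `0` for `j < 0`. -/
noncomputable def invPoch (q : ℂ) (j : ℤ) : ℂ :=
  if 0 ≤ j then (qPoch q q j.toNat)⁻¹ else 0

lemma qPoch_succ' (q : ℂ) (n : ℕ) : qPoch q q (n+1) = qPoch q q n * (1 - q ^ (n+1)) := by
  unfold qPoch
  rw [Finset.prod_range_succ, pow_succ']

lemma qPoch_ne (q : ℂ) (n : ℕ) (h : ∀ j : ℕ, 1 ≤ j → j ≤ n → q ^ j ≠ 1) : qPoch q q n ≠ 0 := by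
  unfold qPoch
  rw [Finset.prod_ne_zero_iff]
  intro i hi
  rw [Finset.mem_range] at hi
  rw [← pow_succ']
  exact sub_ne_zero.mpr (h (i+1) (by omega) (by omega)).symm

lemma vander (q : ℂ) (N : ℕ) : ∀ a : ℕ, (∀ j : ℕ, 1 ≤ j → j ≤ N + a → q ^ j ≠ 1) →
    ∑ i ∈ Finset.range (N+1), q ^ (i*(i+a)) * (qPoch q q (N-i))⁻¹ * (qPoch q q i)⁻¹
      * (qPoch q q (i+a))⁻¹ = (qPoch q q N)⁻¹ * (qPoch q q (N+a))⁻¹ := by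
  induction N with
  | zero => intro a _; simp [qPoch]
  | succ N ih =>
    intro a h
    have ih' := ih (a+1) (fun j h1 h2 => h j h1 (by omega))
    have hN : (1 - q^(N+1)) ≠ 0 := sub_ne_zero.mpr (h (N+1) (by omega) (by omega)).symm
    apply mul_left_cancel₀ hN
    have e : (1 - q^(N+1)) * ((qPoch q q (N+1))⁻¹ * (qPoch q q (N+1+a))⁻¹)
        = (qPoch q q N)⁻¹ * (qPoch q q (N+(a+1)))⁻¹ := by
      rw [qPoch_succ', mul_inv, show N+1+a = N+(a+1) by ring]
      field_simp
    rw [e, ← ih', Finset.mul_sum]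
    have s : ∀ i ∈ Finset.range (N+1+1), (1 - q^(N+1)) * (q ^ (i*(i+a)) *
        (qPoch q q (N+1-i))⁻¹ * (qPoch q q i)⁻¹ * (qPoch q q (i+a))⁻¹)
        = (1 - q^i) * (q ^ (i*(i+a)) *
        (qPoch q q (N+1-i))⁻¹ * (qPoch q q i)⁻¹ * (qPoch q q (i+a))⁻¹)
        + (1 - q^(N+1-i)) * (q ^ i * q ^ (i*(i+a)) *
        (qPoch q q (N+1-i))⁻¹ * (qPoch q q i)⁻¹ * (qPoch q q (i+a))⁻¹) := by
      intro i hi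
      rw [Finset.mem_range] at hi
      have : q^(N+1) = q^i * q^(N+1-i) := by rw [← pow_add]; congr 1; omega
      rw [this]; ring
    rw [Finset.sum_congr rfl s, Finset.sum_add_distrib, Finset.sum_range_succ',
      Finset.sum_range_succ (n := N+1)]
    simp only [Nat.sub_self, pow_zero, sub_self, zero_mul, add_zero]
    rw [← Finset.sum_add_distrib]
    apply Finset.sum_congr rfl
    intro i hi
    rw [Finset.mem_range] at hi
    obtain ⟨d, rfl⟩ : ∃ d, N = i + d := ⟨N - i, by omega⟩
    rw [show i+d+1-(i+1) = d by omega, show i+d+1-i = d+1 by omega, show i+d-i = d by omega,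
      show i+1+a = (i+a)+1 by ring, show i+(a+1) = (i+a)+1 by ring,
      qPoch_succ', qPoch_succ', qPoch_succ']
    have h1 : (1 - q^(i+1)) ≠ 0 := sub_ne_zero.mpr (h _ (by omega) (by omega)).symm
    have h2 : (1 - q^(d+1)) ≠ 0 := sub_ne_zero.mpr (h _ (by omega) (by omega)).symm
    have h3 : (1 - q^(i+a+1)) ≠ 0 := sub_ne_zero.mpr (h _ (by omega) (by omega)).symm
    have p1 := qPoch_ne q i (fun j h1 h2 => h j h1 (by omega))
    have p2 := qPoch_ne q d (fun j h1 h2 => h j h1 (by omega))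
    have p3 := qPoch_ne q (i+a) (fun j h1 h2 => h j h1 (by omega))
    field_simp
    ring

lemma invPoch_nat (q : ℂ) (n : ℕ) : invPoch q (n:ℤ) = (qPoch q q n)⁻¹ := by
  simp [invPoch]

lemma invPoch_neg (q : ℂ) (j : ℤ) (h : j < 0) : invPoch q j = 0 := by
  simp [invPoch, h]

lemma key_nat (q : ℂ) (hq0 : q ≠ 0) (n m : ℕ) (hm : m ≤ n)
    (hq : ∀ j : ℕ, 1 ≤ j → j ≤ 2 * n → q ^ j ≠ 1) :
    ∑ j ∈ Finset.range (n + 1), q ^ (j ^ 2) / qPoch q q (n - j) *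
      (q ^ (-((m:ℤ) ^ 2)) * invPoch q ((j : ℤ) - m) * invPoch q ((j : ℤ) + m))
      = invPoch q ((n:ℤ) - m) * invPoch q ((n:ℤ) + m) := by
  obtain ⟨N, rfl⟩ : ∃ d, n = m + d := ⟨n - m, by omega⟩
  rw [add_assoc, Finset.sum_range_add, Finset.sum_eq_zero, zero_add]
  · have v := vander q N (2*m) (fun j h1 h2 => hq j h1 (by omega))
    rw [show ((m+N:ℕ):ℤ) - m = (N:ℕ) by push_cast; ring,
      show ((m+N:ℕ):ℤ) + m = (N+2*m:ℕ) by push_cast; ring, invPoch_nat, invPoch_nat, ← v]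
    apply Finset.sum_congr rfl
    intro i _
    rw [show ((m+i:ℕ):ℤ) - m = (i:ℕ) by push_cast; ring,
      show ((m+i:ℕ):ℤ) + m = (i+2*m:ℕ) by push_cast; ring, invPoch_nat, invPoch_nat,
      show m+N-(m+i) = N-i by omega]
    have : q ^ (i*(i+2*m)) = q ^ ((m+i)^2) * q ^ (-((m:ℤ)^2)) := by
      rw [← zpow_natCast, ← zpow_natCast, ← zpow_add₀ hq0]
      congr 1; push_cast; ring
    rw [this]; ring
  · intro i hi
    rw [Finset.mem_range] at hi
    rw [invPoch_neg q ((i:ℤ)-m) (by omega)]; ring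

lemma key_int (q : ℂ) (hq0 : q ≠ 0) (n : ℕ) (k : ℤ) (hk : k.natAbs ≤ n)
    (hq : ∀ j : ℕ, 1 ≤ j → j ≤ 2 * n → q ^ j ≠ 1) :
    ∑ j ∈ Finset.range (n + 1), q ^ (j ^ 2) / qPoch q q (n - j) *
      (q ^ (-(k ^ 2)) * invPoch q ((j : ℤ) - k) * invPoch q ((j : ℤ) + k))
      = invPoch q ((n:ℤ) - k) * invPoch q ((n:ℤ) + k) := by
  have h := key_nat q hq0 n k.natAbs hk hq
  rcases Int.natAbs_eq k with e | e
  · rw [← e] at h; exact h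
  · have e' : (k.natAbs : ℤ) = -k := by omega
    rw [e'] at h
    rw [mul_comm (invPoch q ((n:ℤ) - k)), ← sub_neg_eq_add (n:ℤ) k, sub_eq_add_neg (n:ℤ) k, ← h]
    apply Finset.sum_congr rfl
    intro j _
    rw [neg_sq, sub_neg_eq_add, ← sub_eq_add_neg]; ring

theorem stmt_14 (n : ℕ) (q : ℂ) (hq0 : q ≠ 0)
    (hq : ∀ j : ℕ, 1 ≤ j → j ≤ 2 * n → q ^ j ≠ 1)
    (c : ℤ → ℂ) :
    ∑' k : ℤ, c k * invPoch q ((n : ℤ) - k) * invPoch q ((n : ℤ) + k)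
      = ∑ j ∈ Finset.range (n + 1),
          q ^ (j ^ 2) / qPoch q q (n - j) *
            ∑' k : ℤ, c k * q ^ (-(k ^ 2)) * invPoch q ((j : ℤ) - k) * invPoch q ((j : ℤ) + k) := by
  have van : ∀ j : ℕ, j ≤ n → ∀ k ∉ Finset.Icc (-(n:ℤ)) n, ∀ x : ℂ,
      x * invPoch q ((j : ℤ) - k) * invPoch q ((j : ℤ) + k) = 0 := by
    intro j hj k hk x
    rw [Finset.mem_Icc, not_and_or] at hk
    rcases hk with hk | hk
    · rw [invPoch_neg q ((j:ℤ)+k) (by omega), mul_zero]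
    · rw [invPoch_neg q ((j:ℤ)-k) (by omega), mul_zero, zero_mul]
  rw [tsum_eq_sum (s := Finset.Icc (-(n:ℤ)) n) (fun k hk => van n le_rfl k hk _)]
  have : ∀ j ∈ Finset.range (n+1), q ^ (j ^ 2) / qPoch q q (n - j) *
            ∑' k : ℤ, c k * q ^ (-(k ^ 2)) * invPoch q ((j : ℤ) - k) * invPoch q ((j : ℤ) + k)
      = ∑ k ∈ Finset.Icc (-(n:ℤ)) n, c k * (q ^ (j ^ 2) / qPoch q q (n - j) *
      (q ^ (-(k ^ 2)) * invPoch q ((j : ℤ) - k) * invPoch q ((j : ℤ) + k))) := by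
    intro j hj
    rw [Finset.mem_range] at hj
    rw [tsum_eq_sum (s := Finset.Icc (-(n:ℤ)) n) (fun k hk => van j (by omega) k hk _),
      Finset.mul_sum]
    apply Finset.sum_congr rfl
    intro k _
    ring
  rw [Finset.sum_congr rfl this, Finset.sum_comm]
  apply Finset.sum_congr rfl
  intro k hk
  rw [Finset.mem_Icc] at hk
  rw [← Finset.mul_sum, key_int q hq0 n k (by omega) hq, mul_assoc]
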